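/- Let α > 0 and let k_l, k_s, d_l, d_s, γ, T_i, T_∞, h₀ be positive constants with ω = √(d_l/d_s). If 0 < h₀ ≤ 2^α Γ(α/2 + 1) k_s T_i d_s^{(α−1)/2} / (T_∞ √π), then there is NO x > 0 satisfying equation (24): −(k_s T_i d_s^{(α−1)/2} / (γ d_l^{(α+1)/2})) f₁(x) + (h₀ T_∞ / (γ 2^α d_l^{(α+1)/2})) f₂(x) = x^{α+1}. -/

import Mathlib

noncomputable def poch (a : ℝ) (s : ℕ) : ℝ := ∏ i ∈ Finset.range s, (a + i)

/-- Kummer's confluent hypergeometric function `M(a,b,z)`,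
defined by the everywhere-convergent series `M(a,b,z) = Σ_{s} (a)_s z^s / ((b)_s s!)`. -/
noncomputable def kummerM (a b z : ℝ) : ℝ :=
  ∑' s : ℕ, poch a s / (poch b s * (Nat.factorial s)) * z ^ s

/-- Tricomi's confluent hypergeometric function
`U(a,b,z) = (1/Γ(a)) ∫_0^∞ e^{−z t} t^{a−1} (1+t)^{b−a−1} dt`. -/
noncomputable def tricomiU (a b z : ℝ) : ℝ :=
  (1 / Real.Gamma a) *
    ∫ t in Set.Ioi (0:ℝ), Real.exp (-z * t) * t ^ (a - 1) * (1 + t) ^ (b - a - 1)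

/-!
The left-hand side of (24) is nonpositive while the right-hand side is positive. Indeed `U(a, b, ·)`
is decreasing, and at `z = 0` its integral is a Beta integral (substitute `t = u / (1 - u)`), so
`U(a, 1/2, z) ≤ U(a, 1/2, 0) = √π / Γ(a + 1/2)` bounds `f₁` below by `Γ(α/2 + 1) / √π`. The terms of
the series of `M` are nonnegative, so `M ≥ 1` bounds `f₂` above by `1`. The hypothesis on `h₀` says
exactly that these two bounds make the sum nonpositive.
-/

open MeasureTheory ProbabilityTheory Set Filter Topology

section BetaIntegral

variable {a b : ℝ}

lemma ofReal_rpow_mul_one_sub_rpow {x : ℝ} (hx : x ∈ Icc 0 1) :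
    ((x ^ (a - 1) * (1 - x) ^ (b - 1) : ℝ) : ℂ)
      = (x : ℂ) ^ ((a : ℂ) - 1) * (1 - (x : ℂ)) ^ ((b : ℂ) - 1) := by
  push_cast [Complex.ofReal_cpow hx.1, Complex.ofReal_cpow (sub_nonneg.2 hx.2)]
  rfl

lemma integrableOn_rpow_mul_one_sub_rpow (ha : 0 < a) (hb : 0 < b) :
    IntegrableOn (fun x : ℝ ↦ x ^ (a - 1) * (1 - x) ^ (b - 1)) (Ioo 0 1) := by
  have hconv := Complex.betaIntegral_convergent (u := a) (v := b) (by simpa) (by simpa)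
  rw [intervalIntegrable_iff_integrableOn_Ioo_of_le zero_le_one] at hconv
  refine IntegrableOn.congr_fun hconv.re (fun x hx ↦ ?_) measurableSet_Ioo
  rw [← ofReal_rpow_mul_one_sub_rpow (Ioo_subset_Icc_self hx), RCLike.re_to_complex,
    Complex.ofReal_re]

lemma integral_rpow_mul_one_sub_rpow (ha : 0 < a) (hb : 0 < b) :
    ∫ x in Ioo (0 : ℝ) 1, x ^ (a - 1) * (1 - x) ^ (b - 1) = beta a b := by
  rw [beta_eq_betaIntegralReal a b ha hb, Complex.betaIntegral,
    intervalIntegral.integral_of_le zero_le_one, integral_Ioc_eq_integral_Ioo,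
    ← setIntegral_congr_fun measurableSet_Ioo fun x hx ↦
      ofReal_rpow_mul_one_sub_rpow (Ioo_subset_Icc_self hx),
    integral_complex_ofReal, Complex.ofReal_re]

end BetaIntegral

section DivOneSub

lemma strictMonoOn_div_one_sub {𝕜 : Type*} [Field 𝕜] [LinearOrder 𝕜] [IsStrictOrderedRing 𝕜] :
    StrictMonoOn (fun u : 𝕜 ↦ u / (1 - u)) (Iio 1) := by
  intro u hu v hv huv
  rw [div_lt_div_iff₀ (sub_pos.2 hu) (sub_pos.2 hv)]
  linarith

lemma image_div_one_sub_Ioo {𝕜 : Type*} [Field 𝕜] [LinearOrder 𝕜] [IsStrictOrderedRing 𝕜] :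
    (fun u : 𝕜 ↦ u / (1 - u)) '' Ioo 0 1 = Ioi 0 := by
  ext t
  constructor
  · rintro ⟨u, ⟨hu₀, hu₁⟩, rfl⟩
    exact div_pos hu₀ (sub_pos.2 hu₁)
  · intro (ht : 0 < t)
    refine ⟨t / (1 + t), ⟨by positivity, ?_⟩, ?_⟩
    · rw [div_lt_one (by positivity)]
      exact lt_one_add t
    · have : 1 + t ≠ 0 := by positivity
      field_simp
      ring

lemma hasDerivAt_div_one_sub {𝕜 : Type*} [NontriviallyNormedField 𝕜] {u : 𝕜} (hu : u ≠ 1) :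
    HasDerivAt (fun u : 𝕜 ↦ u / (1 - u)) (1 / (1 - u) ^ 2) u := by
  have hquot := (hasDerivAt_id u).div ((hasDerivAt_id u).const_sub 1) (sub_ne_zero.2 hu.symm)
  exact hquot.congr_deriv (by simp)

end DivOneSub

section BetaPrimeIntegral

variable {a b : ℝ}

lemma rpow_mul_one_add_rpow_comp_div_one_sub {u : ℝ} (hu : u ∈ Ioo 0 1) :
    (1 / (1 - u) ^ 2) • ((u / (1 - u)) ^ (a - 1) * (1 + u / (1 - u)) ^ (-(a + b)))
      = u ^ (a - 1) * (1 - u) ^ (b - 1) := by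
  have hv : 0 < 1 - u := sub_pos.2 hu.2
  have hsum : 1 + u / (1 - u) = (1 - u)⁻¹ := by field_simp; ring
  have hexp : (1 - u) ^ (a + b) = (1 - u) ^ (b - 1) * (1 - u) ^ (a - 1) * (1 - u) ^ 2 := by
    rw [← Real.rpow_natCast, ← Real.rpow_add hv, ← Real.rpow_add hv]
    congr 1
    push_cast
    ring
  rw [hsum, Real.inv_rpow hv.le, Real.rpow_neg hv.le, inv_inv, hexp,
    Real.div_rpow hu.1.le hv.le, smul_eq_mul]
  field_simp

lemma integrableOn_rpow_mul_one_add_rpow (ha : 0 < a) (hb : 0 < b) :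
    IntegrableOn (fun t : ℝ ↦ t ^ (a - 1) * (1 + t) ^ (-(a + b))) (Ioi 0) := by
  rw [← image_div_one_sub_Ioo, integrableOn_image_iff_integrableOn_deriv_smul_of_monotoneOn
    measurableSet_Ioo (fun u hu ↦ (hasDerivAt_div_one_sub hu.2.ne).hasDerivWithinAt)
    (strictMonoOn_div_one_sub.monotoneOn.mono Ioo_subset_Iio_self)]
  exact (integrableOn_rpow_mul_one_sub_rpow ha hb).congr_fun
    (fun u hu ↦ (rpow_mul_one_add_rpow_comp_div_one_sub hu).symm) measurableSet_Ioo

lemma integral_rpow_mul_one_add_rpow (ha : 0 < a) (hb : 0 < b) :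
    ∫ t in Ioi (0 : ℝ), t ^ (a - 1) * (1 + t) ^ (-(a + b)) = beta a b := by
  rw [← image_div_one_sub_Ioo, integral_image_eq_integral_deriv_smul_of_monotoneOn
    measurableSet_Ioo (fun u hu ↦ (hasDerivAt_div_one_sub hu.2.ne).hasDerivWithinAt)
    (strictMonoOn_div_one_sub.monotoneOn.mono Ioo_subset_Iio_self),
    setIntegral_congr_fun measurableSet_Ioo fun u hu ↦ rpow_mul_one_add_rpow_comp_div_one_sub hu,
    integral_rpow_mul_one_sub_rpow ha hb]

end BetaPrimeIntegral

section Tricomi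

variable {a b z : ℝ}

lemma integrableOn_tricomiU_integrand (ha : 0 < a) (hb : b < 1) (hz : 0 ≤ z) :
    IntegrableOn (fun t : ℝ ↦ Real.exp (-z * t) * t ^ (a - 1) * (1 + t) ^ (b - a - 1)) (Ioi 0) := by
  have hdom := integrableOn_rpow_mul_one_add_rpow ha (sub_pos.2 hb)
  rw [show -(a + (1 - b)) = b - a - 1 by ring] at hdom
  refine Integrable.mono' hdom (Measurable.aestronglyMeasurable (by fun_prop))
    (ae_restrict_of_forall_mem measurableSet_Ioi fun t (ht : 0 < t) ↦ ?_)
  have hexp : Real.exp (-z * t) ≤ 1 := Real.exp_le_one_iff.2 (by nlinarith)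
  rw [Real.norm_of_nonneg (by positivity), mul_assoc]
  exact mul_le_of_le_one_left (by positivity) hexp

lemma tricomiU_pos (ha : 0 < a) (hb : b < 1) (hz : 0 ≤ z) : 0 < tricomiU a b z := by
  have hpos : ∀ t ∈ Ioi (0 : ℝ),
      0 < Real.exp (-z * t) * t ^ (a - 1) * (1 + t) ^ (b - a - 1) := by
    intro t (ht : 0 < t)
    positivity
  refine mul_pos (one_div_pos.2 (Real.Gamma_pos_of_pos ha)) ?_
  rw [setIntegral_pos_iff_support_of_nonneg_ae
    (ae_restrict_of_forall_mem measurableSet_Ioi fun t ht ↦ (hpos t ht).le)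
    (integrableOn_tricomiU_integrand ha hb hz),
    inter_eq_right.2 fun t ht ↦ Function.mem_support.2 (hpos t ht).ne', Real.volume_Ioi]
  exact ENNReal.zero_lt_top

lemma antitoneOn_tricomiU (ha : 0 < a) (hb : b < 1) : AntitoneOn (tricomiU a b) (Ici 0) := by
  intro y hy z hz hyz
  refine mul_le_mul_of_nonneg_left ?_ (one_div_pos.2 (Real.Gamma_pos_of_pos ha)).le
  refine setIntegral_mono_on (integrableOn_tricomiU_integrand ha hb hz)
    (integrableOn_tricomiU_integrand ha hb hy) measurableSet_Ioi fun t (ht : 0 < t) ↦ ?_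
  gcongr

lemma tricomiU_zero_right (ha : 0 < a) (hb : b < 1) :
    tricomiU a b 0 = Real.Gamma (1 - b) / Real.Gamma (a - b + 1) := by
  have hint := integral_rpow_mul_one_add_rpow ha (sub_pos.2 hb)
  rw [show -(a + (1 - b)) = b - a - 1 by ring, beta, show a + (1 - b) = a - b + 1 by ring] at hint
  have hΓ : Real.Gamma a ≠ 0 := (Real.Gamma_pos_of_pos ha).ne'
  simp only [tricomiU, neg_zero, zero_mul, Real.exp_zero, one_mul, hint]
  field_simp

lemma tricomiU_one_half_le (ha : 0 < a) (hz : 0 ≤ z) :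
    tricomiU a (1 / 2) z ≤ √Real.pi / Real.Gamma (a + 1 / 2) := by
  have hb : (1 / 2 : ℝ) < 1 := one_half_lt_one
  calc tricomiU a (1 / 2) z
      ≤ tricomiU a (1 / 2) 0 := antitoneOn_tricomiU ha hb self_mem_Ici hz hz
    _ = Real.Gamma (1 - 1 / 2) / Real.Gamma (a - 1 / 2 + 1) := tricomiU_zero_right ha hb
    _ = √Real.pi / Real.Gamma (a + 1 / 2) := by
      rw [sub_half, Real.Gamma_one_half_eq, show a - 1 / 2 + 1 = a + 1 / 2 by ring]

lemma Gamma_div_sqrt_pi_le_one_div_tricomiU (ha : 0 < a) (hz : 0 ≤ z) :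
    Real.Gamma (a + 1 / 2) / √Real.pi ≤ 1 / tricomiU a (1 / 2) z := by
  rw [← one_div_div]
  exact one_div_le_one_div_of_le (tricomiU_pos ha one_half_lt_one hz) (tricomiU_one_half_le ha hz)

end Tricomi

section Kummer

variable {a b z : ℝ}

lemma poch_nonneg (ha : 0 ≤ a) (s : ℕ) : 0 ≤ poch a s :=
  Finset.prod_nonneg fun _ _ ↦ by positivity

lemma poch_succ (a : ℝ) (s : ℕ) : poch a (s + 1) = poch a s * (a + s) :=
  Finset.prod_range_succ _ s

lemma summable_kummerM (a b z : ℝ) :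
    Summable fun s : ℕ ↦ poch a s / (poch b s * s.factorial) * z ^ s := by
  have hratio : Tendsto (fun s : ℕ ↦ (a + s) / (b + s) * (z * (1 / ((s : ℝ) + 1))))
      atTop (𝓝 0) := by
    simpa using (tendsto_add_mul_div_add_mul_atTop_nhds a b 1 one_ne_zero).mul
      (tendsto_one_div_add_atTop_nhds_zero_nat.const_mul z)
  refine summable_of_ratio_norm_eventually_le one_half_lt_one ?_
  filter_upwards [hratio.norm.eventually_le_const (by simp : ‖(0 : ℝ)‖ < 1 / 2)] with s hs
  have hsucc : poch a (s + 1) / (poch b (s + 1) * (s + 1).factorial) * z ^ (s + 1)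
      = (a + s) / (b + s) * (z * (1 / ((s : ℝ) + 1)))
        * (poch a s / (poch b s * s.factorial) * z ^ s) := by
    rw [poch_succ, poch_succ, Nat.factorial_succ, pow_succ]
    push_cast
    simp only [div_eq_mul_inv, mul_inv]
    ring
  rw [hsucc, norm_mul]
  gcongr

lemma one_le_kummerM (ha : 0 ≤ a) (hb : 0 ≤ b) (hz : 0 ≤ z) : 1 ≤ kummerM a b z := by
  have hterm : ∀ s : ℕ, 0 ≤ poch a s / (poch b s * s.factorial) * z ^ s := fun s ↦ by
    have := poch_nonneg ha s
    have := poch_nonneg hb s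
    positivity
  calc (1 : ℝ) = poch a 0 / (poch b 0 * Nat.factorial 0) * z ^ 0 := by simp [poch]
    _ ≤ kummerM a b z := (summable_kummerM a b z).le_tsum 0 fun s _ ↦ hterm s

end Kummer

theorem statement_11_general {α kl ks dl ds γ Ti Tinf h₀ : ℝ}
    (hα : -1 < α) (hkl : 0 < kl) (hks : 0 < ks) (hdl : 0 < dl) (hds : 0 < ds)
    (hγ : 0 < γ) (hTi : 0 < Ti) (hTinf : 0 < Tinf) (hh₀ : 0 < h₀)
    (hcond : h₀ ≤ (2 : ℝ) ^ α * Real.Gamma (α / 2 + 1) * ks * Ti * ds ^ ((α - 1) / 2)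
      / (Tinf * √Real.pi)) (ω : ℝ) {x : ℝ} (hx : 0 ≤ x) :
    -(ks * Ti * ds ^ ((α - 1) / 2) / (γ * dl ^ ((α + 1) / 2))) *
        (1 / tricomiU (α / 2 + 1 / 2) (1 / 2) (x ^ 2 * ω ^ 2))
      + h₀ * Tinf / (γ * (2 : ℝ) ^ α * dl ^ ((α + 1) / 2)) *
        (1 / (kummerM (α / 2 + 1 / 2) (1 / 2) (x ^ 2)
              + 2 * √dl * h₀ / kl * x * kummerM (α / 2 + 1) (3 / 2) (x ^ 2)))
      ≤ 0 := by
  set A := ks * Ti * ds ^ ((α - 1) / 2) / (γ * dl ^ ((α + 1) / 2))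
  set B := h₀ * Tinf / (γ * (2 : ℝ) ^ α * dl ^ ((α + 1) / 2))
  set U := tricomiU (α / 2 + 1 / 2) (1 / 2) (x ^ 2 * ω ^ 2)
  set D := kummerM (α / 2 + 1 / 2) (1 / 2) (x ^ 2)
    + 2 * √dl * h₀ / kl * x * kummerM (α / 2 + 1) (3 / 2) (x ^ 2)
  have ha : 0 < α / 2 + 1 / 2 := by linarith
  have hU : Real.Gamma (α / 2 + 1) / √Real.pi ≤ 1 / U := by
    simpa only [add_assoc, add_halves] using
      Gamma_div_sqrt_pi_le_one_div_tricomiU ha (z := x ^ 2 * ω ^ 2) (by positivity)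
  have hD : 1 ≤ D := by
    have hM₁ := one_le_kummerM ha.le one_half_pos.le (sq_nonneg x)
    have hM₂ : 0 ≤ kummerM (α / 2 + 1) (3 / 2) (x ^ 2) :=
      zero_le_one.trans (one_le_kummerM (by linarith) (by norm_num) (sq_nonneg x))
    exact le_add_of_le_of_nonneg hM₁ (by positivity)
  have hBA : B ≤ A * (Real.Gamma (α / 2 + 1) / √Real.pi) :=
    calc B ≤ (2 : ℝ) ^ α * Real.Gamma (α / 2 + 1) * ks * Ti * ds ^ ((α - 1) / 2)
          / (Tinf * √Real.pi) * Tinf / (γ * (2 : ℝ) ^ α * dl ^ ((α + 1) / 2)) := by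
          unfold B
          gcongr
      _ = A * (Real.Gamma (α / 2 + 1) / √Real.pi) := by
        unfold A
        field_simp
  have hsum : B * (1 / D) ≤ A * (1 / U) :=
    calc B * (1 / D) ≤ B :=
          mul_le_of_le_one_right (by positivity) (div_le_one_of_le₀ hD (by positivity))
      _ ≤ A * (Real.Gamma (α / 2 + 1) / √Real.pi) := hBA
      _ ≤ A * (1 / U) := by gcongr
  linarith

/-- if `0 < h₀ ≤ 2^α Γ(α/2+1) k_s T_i d_s^{(α−1)/2} / (T_∞ √π)` then
equation (24) has no positive solution. -/
theorem statement_11 (α kl ks dl ds γ Ti Tinf h₀ : ℝ)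
    (hα : 0 < α) (hkl : 0 < kl) (hks : 0 < ks) (hdl : 0 < dl) (hds : 0 < ds)
    (hγ : 0 < γ) (hTi : 0 < Ti) (hTinf : 0 < Tinf) (hh₀ : 0 < h₀)
    (ω : ℝ) (hω : ω = Real.sqrt (dl / ds))
    (hcond : h₀ ≤ (2:ℝ) ^ α * Real.Gamma (α / 2 + 1) * ks * Ti * ds ^ ((α - 1) / 2)
      / (Tinf * Real.sqrt Real.pi)) :
    ¬ ∃ x : ℝ, 0 < x ∧
      -(ks * Ti * ds ^ ((α - 1) / 2) / (γ * dl ^ ((α + 1) / 2))) *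
          (1 / tricomiU (α / 2 + 1 / 2) (1 / 2) (x ^ 2 * ω ^ 2))
        + h₀ * Tinf / (γ * (2:ℝ) ^ α * dl ^ ((α + 1) / 2)) *
          (1 / (kummerM (α / 2 + 1 / 2) (1 / 2) (x ^ 2)
                + 2 * Real.sqrt dl * h₀ / kl * x * kummerM (α / 2 + 1) (3 / 2) (x ^ 2)))
        = x ^ (α + 1) := by
  rintro ⟨x, hx, heq⟩
  exact (Real.rpow_pos_of_pos hx (α + 1)).not_ge <| heq ▸ statement_11_general
    (by linarith) hkl hks hdl hds hγ hTi hTinf hh₀ hcond ω hx.le
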